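/- (Gradient Rellich inequality on convex domains) Let Ω ⊂ ℝ^N be convex with d(x) = dist(x, ∂Ω) bounded on Ω. Then for every u ∈ C_c^∞(Ω), ∫_Ω (Δu)² dx ≥ (1/4) ∫_Ω |∇u|²/d² dx. -/

import Mathlib

open Real MeasureTheory

/-- The Laplacian of `f : ℝ^N → ℝ`. -/
noncomputable def lap {N : ℕ} (f : EuclideanSpace ℝ (Fin N) → ℝ)
    (x : EuclideanSpace ℝ (Fin N)) : ℝ :=
  ∑ i, iteratedFDeriv ℝ 2 f x ![EuclideanSpace.single i 1, EuclideanSpace.single i 1]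

/-!
For a line parallel to `v`, let `D_v x` be the distance from `x` to the complement of `Ω` along
that line. The one-dimensional Hardy inequality, which comes from completing the square in
`(f² / (2 (t - s)))'`, integrates by Fubini to `∫ f² / (4 D_v²) ≤ ∫ (∂_v f)²`. If `y` is a nearest
boundary point to `x` and `L` a linear functional with `L < L y` on `Ω`, then
`1 / D_i x ≥ |L e_i| / (L y - L x)` for each coordinate direction, and so
`∑ i, 1 / D_i² ≥ ‖L‖² / (L y - L x)² ≥ 1 / d²`. Summing over `i` proves Hardy's inequality
`∫ f² / (4 d²) ≤ ∫ ‖∇f‖²` on `Ω`. Apply it to `f = ∂_j u` and sum over `j`; two integrations by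
parts give `∫ (Δu)² = ∑ j, ∫ ‖∇∂_j u‖²`.
-/

open Set Metric
open scoped ENNReal

section ENorm

lemma lintegral_sq_enorm_eq_ofReal_integral {α : Type*} [MeasurableSpace α] {μ : Measure α}
    {g : α → ℝ} (hg : Integrable (fun x ↦ g x ^ 2) μ) :
    ∫⁻ x, ‖g x‖ₑ ^ 2 ∂μ = ENNReal.ofReal (∫ x, g x ^ 2 ∂μ) := by
  simpa using (ofReal_integral_norm_eq_lintegral_enorm hg).symm

lemma enorm_div_of_ne_zero (a : ℝ) {b : ℝ} (hb : b ≠ 0) : ‖a / b‖ₑ = ‖a‖ₑ / ‖b‖ₑ := by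
  rw [div_eq_mul_inv, enorm_mul, enorm_inv hb, div_eq_mul_inv]

lemma div_two_mul_sq (a D : ℝ≥0∞) : (a / (2 * D)) ^ 2 = (a / 2) ^ 2 * D⁻¹ ^ 2 := by
  rw [← mul_pow, div_eq_mul_inv, ENNReal.mul_inv (.inl two_ne_zero) (.inl ENNReal.ofNat_ne_top),
    ← mul_assoc, div_eq_mul_inv]

-- Only `≤`: where `infDist x s = 0` the left side is `a / 0 = 0`, while the right side may be `⊤`.
lemma enorm_div_infDist_le {X : Type*} [PseudoMetricSpace X] (a : ℝ) (x : X) (s : Set X) :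
    ‖a / (2 * infDist x s)‖ₑ ≤ ‖a‖ₑ / (2 * infEDist x s) := by
  rcases eq_or_ne (infDist x s) 0 with h | h
  · simp [h]
  rw [enorm_div_of_ne_zero a (mul_ne_zero two_ne_zero h), enorm_mul,
    Real.enorm_of_nonneg zero_le_two, ENNReal.ofReal_ofNat, Real.enorm_of_nonneg infDist_nonneg]
  gcongr
  exact (ENNReal.ofReal_toReal fun htop ↦ h (by rw [infDist, htop, ENNReal.toReal_top])).ge

lemma edist_le_infEDist_compl {X : Type*} [PseudoEMetricSpace X] {x y : X} {s : Set X}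
    (h : eball x (edist x y) ⊆ s) : edist x y ≤ infEDist x sᶜ :=
  le_infEDist.2 fun z hz ↦ le_of_not_gt fun hlt ↦ hz (h (by rwa [mem_eball']))

end ENorm

section Interval

variable {f : ℝ → ℝ}

lemma hasDerivAt_sq_div_two_mul_sub {f' s t : ℝ} (hf : HasDerivAt f f' t) (hts : t - s ≠ 0) :
    HasDerivAt (fun τ ↦ f τ ^ 2 / (2 * (τ - s)))
      (f' ^ 2 - (f t / (2 * (t - s))) ^ 2 - (f' - f t / (2 * (t - s))) ^ 2) t := by
  have hden : HasDerivAt (fun τ ↦ 2 * (τ - s)) (2 * 1) t :=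
    ((hasDerivAt_id t).sub_const s).const_mul 2
  refine ((hf.fun_pow 2).fun_div hden (by simpa using hts)).congr_deriv ?_
  push_cast
  field_simp
  ring

lemma integral_sq_div_le_integral_deriv_sq (hf : ContDiff ℝ 1 f) {p q s : ℝ} (hpq : p ≤ q)
    (hs : s ∉ Icc p q) (hbdry : f p ^ 2 / (2 * (p - s)) ≤ f q ^ 2 / (2 * (q - s))) :
    ∫ t in p..q, (f t / (2 * (t - s))) ^ 2 ≤ ∫ t in p..q, deriv f t ^ 2 := by
  have hts : ∀ t ∈ uIcc p q, t - s ≠ 0 := fun t ht h ↦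
    hs (sub_eq_zero.1 h ▸ uIcc_of_le hpq ▸ ht)
  have hf' : Continuous (deriv f) := hf.continuous_deriv_one
  have hquot : ContinuousOn (fun t ↦ f t / (2 * (t - s))) (uIcc p q) :=
    hf.continuous.continuousOn.div (by fun_prop) fun t ht ↦ mul_ne_zero two_ne_zero (hts t ht)
  have hderiv : IntervalIntegrable (fun t ↦ deriv f t ^ 2) volume p q :=
    (hf'.pow 2).intervalIntegrable p q
  have hweight : IntervalIntegrable (fun t ↦ (f t / (2 * (t - s))) ^ 2) volume p q :=
    (hquot.pow 2).intervalIntegrable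
  have hdefect : IntervalIntegrable (fun t ↦ (deriv f t - f t / (2 * (t - s))) ^ 2) volume p q :=
    ((hf'.continuousOn.sub hquot).pow 2).intervalIntegrable
  have hftc : (∫ t in p..q, deriv f t ^ 2) - (∫ t in p..q, (f t / (2 * (t - s))) ^ 2) -
      (∫ t in p..q, (deriv f t - f t / (2 * (t - s))) ^ 2) =
        f q ^ 2 / (2 * (q - s)) - f p ^ 2 / (2 * (p - s)) := by
    rw [← intervalIntegral.integral_sub hderiv hweight,
      ← intervalIntegral.integral_sub (hderiv.sub hweight) hdefect]
    exact intervalIntegral.integral_eq_sub_of_hasDerivAt (f := fun t ↦ f t ^ 2 / (2 * (t - s)))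
      (fun t ht ↦ hasDerivAt_sq_div_two_mul_sub (hf.differentiable_one t).hasDerivAt (hts t ht))
      ((hderiv.sub hweight).sub hdefect)
  have hdefect_nonneg : 0 ≤ ∫ t in p..q, (deriv f t - f t / (2 * (t - s))) ^ 2 :=
    intervalIntegral.integral_nonneg hpq fun t _ ↦ sq_nonneg _
  linarith

lemma enorm_div_infEDist_compl_le (a : ℝ) {t s : ℝ} {I : Set ℝ} (hts : t - s ≠ 0)
    (hI : eball t (edist t s) ⊆ I) :
    ‖a‖ₑ / (2 * infEDist t Iᶜ) ≤ ‖a / (2 * (t - s))‖ₑ := by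
  rw [enorm_div_of_ne_zero a (mul_ne_zero two_ne_zero hts), enorm_mul, ← edist_eq_enorm_sub,
    Real.enorm_of_nonneg zero_le_two, ENNReal.ofReal_ofNat]
  gcongr
  exact edist_le_infEDist_compl hI

lemma setLIntegral_sq_div_le_setLIntegral_deriv_sq (hf : ContDiff ℝ 1 f) {p q s : ℝ}
    (hpq : p ≤ q) (hs : s ∉ Icc p q)
    (hbdry : f p ^ 2 / (2 * (p - s)) ≤ f q ^ 2 / (2 * (q - s))) :
    ∫⁻ t in Ioc p q, ‖f t / (2 * (t - s))‖ₑ ^ 2 ≤ ∫⁻ t in Ioc p q, ‖deriv f t‖ₑ ^ 2 := by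
  have hquot : ContinuousOn (fun t ↦ f t / (2 * (t - s))) (Icc p q) :=
    hf.continuous.continuousOn.div (by fun_prop) fun t ht ↦
      mul_ne_zero two_ne_zero fun h ↦ hs (sub_eq_zero.1 h ▸ ht)
  rw [lintegral_sq_enorm_eq_ofReal_integral
      ((hquot.pow 2).integrableOn_Icc.mono_set Ioc_subset_Icc_self),
    lintegral_sq_enorm_eq_ofReal_integral
      ((hf.continuous_deriv_one.pow 2).integrableOn_Icc.mono_set Ioc_subset_Icc_self),
    ← intervalIntegral.integral_of_le hpq, ← intervalIntegral.integral_of_le hpq]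
  exact ENNReal.ofReal_le_ofReal (integral_sq_div_le_integral_deriv_sq hf hpq hs hbdry)

lemma exists_Ioo_superset_and_Icc_subset {K I : Set ℝ} (hK : IsCompact K) (hne : K.Nonempty)
    (hI : IsOpen I) (hconn : I.OrdConnected) (hKI : K ⊆ I) :
    ∃ p q δ, p ≤ q ∧ 0 < δ ∧ K ⊆ Ioo p q ∧ Icc (p - δ) (q + δ) ⊆ I := by
  obtain ⟨δ, hδ, hδI⟩ := hK.exists_cthickening_subset_open hI hKI
  obtain ⟨c, hcK, hc⟩ := hK.exists_isLeast hne
  obtain ⟨e, heK, he⟩ := hK.exists_isGreatest hne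
  have hmem {a b : ℝ} (hb : b ∈ K) (hab : |a - b| = δ) : a ∈ I :=
    hδI (mem_cthickening_of_dist_le a b δ K hb (by rw [Real.dist_eq, hab]))
  refine ⟨c - δ / 2, e + δ / 2, δ / 2, by linarith [hc heK], half_pos hδ, fun t ht ↦ ?_, ?_⟩
  · constructor <;> linarith [hc ht, he ht]
  · refine hconn.out (hmem hcK ?_) (hmem heK ?_)
    · rw [show c - δ / 2 - δ / 2 - c = -δ by ring, abs_neg, abs_of_pos hδ]
    · rw [show e + δ / 2 + δ / 2 - e = δ by ring, abs_of_pos hδ]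

lemma setLIntegral_sq_div_infEDist_le (hf : ContDiff ℝ 1 f) {p q s : ℝ} {I : Set ℝ}
    (hpq : p ≤ q) (hs : s ∉ Icc p q)
    (hbdry : f p ^ 2 / (2 * (p - s)) ≤ f q ^ 2 / (2 * (q - s)))
    (hI : ∀ t ∈ Ioc p q, eball t (edist t s) ⊆ I) :
    ∫⁻ t in Ioc p q, (‖f t‖ₑ / (2 * infEDist t Iᶜ)) ^ 2 ≤ ∫⁻ t in Ioc p q, ‖deriv f t‖ₑ ^ 2 := by
  refine le_trans (setLIntegral_mono' measurableSet_Ioc fun t ht ↦ ?_)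
    (setLIntegral_sq_div_le_setLIntegral_deriv_sq hf hpq hs hbdry)
  have hts : t - s ≠ 0 := fun h ↦ hs (sub_eq_zero.1 h ▸ Ioc_subset_Icc_self ht)
  gcongr
  exact enorm_div_infEDist_compl_le _ hts (hI t ht)

theorem lintegral_sq_div_infEDist_compl_le (hf : ContDiff ℝ 1 f) (hfc : HasCompactSupport f)
    {I : Set ℝ} (hI : IsOpen I) (hconn : I.OrdConnected) (hfI : tsupport f ⊆ I) :
    ∫⁻ t, (‖f t‖ₑ / (2 * infEDist t Iᶜ)) ^ 2 ≤ ∫⁻ t, ‖deriv f t‖ₑ ^ 2 := by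
  rcases (tsupport f).eq_empty_or_nonempty with hempty | hne
  · simp [tsupport_eq_empty_iff.1 hempty]
  obtain ⟨p, q, δ, hpq, hδ, hsupp, hpqI⟩ :=
    exists_Ioo_superset_and_Icc_subset hfc hne hI hconn hfI
  have hzero {t : ℝ} (ht : t ∉ Ioo p q) : f t = 0 :=
    image_eq_zero_of_notMem_tsupport fun h ↦ ht (hsupp h)
  have hball {t s : ℝ} (hl : p - δ ≤ t - |t - s|) (hr : t + |t - s| ≤ q + δ) :
      eball t (edist t s) ⊆ I := by
    rw [edist_dist, eball_ofReal, Real.dist_eq, Real.ball_eq_Ioo]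
    exact (Ioo_subset_Icc_self.trans (Icc_subset_Icc hl hr)).trans hpqI
  obtain ⟨m, hpm, hmq, hmid⟩ : ∃ m, p ≤ m ∧ m ≤ q ∧ p + q = 2 * m :=
    ⟨(p + q) / 2, by linarith, by linarith, by ring⟩
  have hleft := setLIntegral_sq_div_infEDist_le hf (s := p - δ) (I := I) hpm
    (fun h ↦ by linarith [h.1])
    (by rw [hzero (t := p) (by simp)]
        simpa using div_nonneg (sq_nonneg (f m)) (by linarith))
    (fun t ht ↦ hball (by rw [abs_of_pos] <;> linarith [ht.1])
      (by rw [abs_of_pos] <;> linarith [ht.1, ht.2]))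
  have hright := setLIntegral_sq_div_infEDist_le hf (s := q + δ) (I := I) hmq
    (fun h ↦ by linarith [h.2])
    (by rw [hzero (t := q) (by simp)]
        simpa using div_nonpos_of_nonneg_of_nonpos (sq_nonneg (f m)) (by linarith))
    (fun t ht ↦ hball (by rw [abs_of_neg] <;> linarith [ht.1, ht.2])
      (by rw [abs_of_neg] <;> linarith [ht.2]))
  have hdisj : Disjoint (Ioc p m) (Ioc m q) := Ioc_disjoint_Ioc_of_le le_rfl
  calc ∫⁻ t, (‖f t‖ₑ / (2 * infEDist t Iᶜ)) ^ 2
      = ∫⁻ t in Ioc p m ∪ Ioc m q, (‖f t‖ₑ / (2 * infEDist t Iᶜ)) ^ 2 := by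
        rw [Ioc_union_Ioc_eq_Ioc hpm hmq]
        refine (setLIntegral_eq_of_support_subset fun t ht ↦ ?_).symm
        by_contra hnot
        exact ht (by simp [hzero fun h ↦ hnot (Ioo_subset_Ioc_self h)])
    _ ≤ ∫⁻ t in Ioc p m ∪ Ioc m q, ‖deriv f t‖ₑ ^ 2 := by
        rw [lintegral_union measurableSet_Ioc hdisj, lintegral_union measurableSet_Ioc hdisj]
        exact add_le_add hleft hright
    _ ≤ ∫⁻ t, ‖deriv f t‖ₑ ^ 2 := setLIntegral_le_lintegral _ _

end Interval

section Line

variable {E : Type*} [NormedAddCommGroup E] [NormedSpace ℝ E] {Ω : Set E} {f : E → ℝ} {v : E}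

/-- The distance from `x` to the complement of `s` measured along the line `x + ℝ v`, in multiples
of `v` and counting both directions; it is `⊤` if the line does not leave `s`. Hardy's inequality
holds with this weight on each line, so it reduces the inequality on `s` to dimension one. -/
noncomputable def lineEDist (s : Set E) (v x : E) : ℝ≥0∞ :=
  infEDist 0 {t : ℝ | x + t • v ∉ s}

lemma lineEDist_add_smul (s : Set E) (v x : E) (t : ℝ) :
    lineEDist s v (x + t • v) = infEDist t ((fun τ : ℝ ↦ x + τ • v) ⁻¹' s)ᶜ := by
  rw [lineEDist, ← infEDist_image (isometry_add_left t), add_zero]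
  congr 1
  ext τ
  simp [add_smul, add_assoc]

lemma lowerSemicontinuous_lineEDist (hΩ : IsOpen Ω) (v : E) :
    LowerSemicontinuous (lineEDist Ω v) := by
  intro x c hc
  obtain ⟨r, hcr, hr⟩ := ENNReal.lt_iff_exists_nnreal_btwn.1 hc
  have hball : IsCompact (closedEBall (0 : ℝ) r) := by
    simpa only [closedEBall_coe] using isCompact_closedBall (0 : ℝ) r
  have hmem : ∀ t ∈ closedEBall (0 : ℝ) r, x + t • v ∈ Ω := fun t ht ↦ by
    by_contra hnot
    exact ((infEDist_le_edist_of_mem hnot).trans (mem_closedEBall'.1 ht)).not_gt hr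
  have hopen : IsOpen {z : E × ℝ | z.1 + z.2 • v ∈ Ω} := hΩ.preimage (by fun_prop)
  filter_upwards [hball.eventually_forall_of_forall_eventually
    (P := fun y t ↦ y + t • v ∈ Ω) fun t ht ↦ hopen.mem_nhds (hmem t ht)] with y hy
  exact hcr.trans_le <| le_infEDist.2 fun t ht ↦
    le_of_not_gt fun hlt ↦ ht (hy t (mem_closedEBall'.2 hlt.le))

lemma measurable_sq_div_lineEDist [MeasurableSpace E] [BorelSpace E] (hf : Continuous f)
    (hΩ : IsOpen Ω) (v : E) :
    Measurable fun x ↦ (‖f x‖ₑ / (2 * lineEDist Ω v x)) ^ 2 :=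
  (hf.measurable.enorm.div
    ((lowerSemicontinuous_lineEDist hΩ v).measurable.const_mul 2)).pow_const 2

lemma measurable_fderiv_apply_sq [MeasurableSpace E] [BorelSpace E] (hf : ContDiff ℝ 1 f) (v : E) :
    Measurable fun x ↦ ‖fderiv ℝ f x v‖ₑ ^ 2 :=
  ((hf.continuous_fderiv one_ne_zero).clm_apply continuous_const).measurable.enorm.pow_const 2

theorem lintegral_line_sq_div_lineEDist_le (hf : ContDiff ℝ 1 f) (hfc : HasCompactSupport f)
    (hΩ : IsOpen Ω) (hconv : Convex ℝ Ω) (hfΩ : tsupport f ⊆ Ω) (hv : v ≠ 0) (x : E) :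
    ∫⁻ t : ℝ, (‖f (x + t • v)‖ₑ / (2 * lineEDist Ω v (x + t • v))) ^ 2 ≤
      ∫⁻ t : ℝ, ‖fderiv ℝ f (x + t • v) v‖ₑ ^ 2 := by
  have hline : Topology.IsClosedEmbedding fun t : ℝ ↦ x + t • v :=
    (Homeomorph.addLeft x).isClosedEmbedding.comp (isClosedEmbedding_smul_left hv)
  have hderiv (t : ℝ) : deriv (fun τ : ℝ ↦ f (x + τ • v)) t = fderiv ℝ f (x + t • v) v := by
    have hline' : HasDerivAt (fun τ : ℝ ↦ x + τ • v) v t := by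
      simpa using ((hasDerivAt_id t).smul_const v).const_add x
    exact ((hf.differentiable_one _).hasFDerivAt.comp_hasDerivAt t hline').deriv
  simp only [lineEDist_add_smul, ← hderiv]
  refine lintegral_sq_div_infEDist_compl_le (f := fun t ↦ f (x + t • v)) (hf.comp (by fun_prop))
    (hfc.comp_isClosedEmbedding hline) (hΩ.preimage hline.continuous) ?_
    ((tsupport_comp_subset_preimage f hline.continuous).trans (preimage_mono hfΩ))
  exact ((hconv.translate_preimage_right x).linear_preimage
    (LinearMap.toSpanSingleton ℝ E v)).ordConnected

lemma enorm_div_le_inv_lineEDist {L : E →ₗ[ℝ] ℝ} {x y : E} (hL : ∀ z ∈ Ω, L z < L y)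
    (hx : x ∈ Ω) (v : E) : ‖L v / (L y - L x)‖ₑ ≤ (lineEDist Ω v x)⁻¹ := by
  rcases eq_or_ne (L v) 0 with hv | hv
  · simp [hv]
  have hne : (L y - L x) / L v ≠ 0 := div_ne_zero (sub_pos.2 (hL x hx)).ne' hv
  rw [← inv_div, enorm_inv hne, ENNReal.inv_le_inv, ← edist_zero_right, edist_comm, lineEDist]
  refine infEDist_le_edist_of_mem fun hmem ↦ (hL _ hmem).ne ?_
  rw [map_add, map_smul, smul_eq_mul, div_mul_cancel₀ _ hv, add_sub_cancel]

end Line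

section InnerProduct

variable {ι E : Type*} [Fintype ι] [NormedAddCommGroup E] [InnerProductSpace ℝ E] {Ω : Set E}
  {x : E}

lemma inv_edist_sq_le_sum_inv_lineEDist_sq (b : OrthonormalBasis ι ℝ E) (hΩ : IsOpen Ω)
    (hconv : Convex ℝ Ω) (hx : x ∈ Ω) {y : E} (hy : y ∉ Ω) :
    (edist x y)⁻¹ ^ 2 ≤ ∑ i, (lineEDist Ω (b i) x)⁻¹ ^ 2 := by
  obtain ⟨L, hL⟩ := geometric_hahn_banach_open_point hconv hΩ hy
  have hgap : 0 < L y - L x := sub_pos.2 (hL x hx)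
  have hdist : 0 < dist x y := dist_pos.2 fun h ↦ hy (h ▸ hx)
  have hgap_le : L y - L x ≤ ‖L‖ * dist x y := by
    rw [← map_sub, dist_comm, dist_eq_norm]
    exact (le_abs_self _).trans (L.le_opNorm _)
  calc (edist x y)⁻¹ ^ 2 = ENNReal.ofReal ((dist x y)⁻¹ ^ 2) := by
        rw [edist_dist, ← ENNReal.ofReal_inv_of_pos hdist, ENNReal.ofReal_pow (by positivity)]
    _ ≤ ENNReal.ofReal ((‖L‖ / (L y - L x)) ^ 2) := by
        gcongr
        rwa [inv_eq_one_div, div_le_div_iff₀ hdist hgap, one_mul]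
    _ = ∑ i, ‖L (b i) / (L y - L x)‖ₑ ^ 2 := by
        simp only [div_pow, b.norm_dual, Finset.sum_div, ← enorm_pow]
        rw [ENNReal.ofReal_sum_of_nonneg fun i _ ↦ by positivity]
        exact Finset.sum_congr rfl fun i _ ↦ (Real.enorm_of_nonneg (by positivity)).symm
    _ ≤ ∑ i, (lineEDist Ω (b i) x)⁻¹ ^ 2 := by
        gcongr with i
        exact enorm_div_le_inv_lineEDist (L := L.toLinearMap) hL hx (b i)

lemma inv_infEDist_frontier_sq_le_sum (b : OrthonormalBasis ι ℝ E) (hΩ : IsOpen Ω)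
    (hconv : Convex ℝ Ω) (hx : x ∈ Ω) :
    (infEDist x (frontier Ω))⁻¹ ^ 2 ≤ ∑ i, (lineEDist Ω (b i) x)⁻¹ ^ 2 := by
  rcases (frontier Ω).eq_empty_or_nonempty with hempty | hne
  · simp [hempty]
  have : FiniteDimensional ℝ E := b.toBasis.finiteDimensional_of_finite
  obtain ⟨y, hy, hxy⟩ := isClosed_frontier.exists_infDist_eq_dist hne x
  have hedist : infEDist x (frontier Ω) = edist x y := by
    rw [edist_dist, ← hxy, infDist, ENNReal.ofReal_toReal (infEDist_ne_top hne)]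
  rw [hedist]
  exact inv_edist_sq_le_sum_inv_lineEDist_sq b hΩ hconv hx (hΩ.frontier_eq ▸ hy).2

lemma norm_gradient [CompleteSpace E] (f : E → ℝ) (x : E) : ‖gradient f x‖ = ‖fderiv ℝ f x‖ :=
  LinearIsometryEquiv.norm_map _ _

lemma norm_gradient_sq [CompleteSpace E] (b : OrthonormalBasis ι ℝ E) (f : E → ℝ) (x : E) :
    ‖gradient f x‖ ^ 2 = ∑ i, fderiv ℝ f x (b i) ^ 2 := by
  rw [norm_gradient, b.norm_dual]

lemma enorm_gradient_sq [CompleteSpace E] (b : OrthonormalBasis ι ℝ E) (f : E → ℝ) (x : E) :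
    ‖gradient f x‖ₑ ^ 2 = ∑ i, ‖fderiv ℝ f x (b i)‖ₑ ^ 2 := by
  simp only [← enorm_pow, Real.enorm_of_nonneg (sq_nonneg _)]
  rw [← ENNReal.ofReal_sum_of_nonneg fun i _ ↦ sq_nonneg _, ← norm_gradient_sq,
    ← ofReal_norm, ENNReal.ofReal_pow (norm_nonneg _)]

lemma integrable_norm_gradient_sq [CompleteSpace E] [MeasurableSpace E] [BorelSpace E]
    {μ : Measure E} [IsFiniteMeasureOnCompacts μ] {f : E → ℝ} (hf : ContDiff ℝ 1 f)
    (hfc : HasCompactSupport f) : Integrable (fun x ↦ ‖gradient f x‖ ^ 2) μ := by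
  have hcont : Continuous fun x ↦ ‖fderiv ℝ f x‖ := (hf.continuous_fderiv one_ne_zero).norm
  simp only [norm_gradient, sq]
  exact (hcont.mul hcont).integrable_of_hasCompactSupport (hfc.fderiv ℝ).norm.mul_right

end InnerProduct

section Euclidean

lemma toLp_update_eq_add_smul_single {ι : Type*} [DecidableEq ι] (y : ι → ℝ) (i : ι) (t : ℝ) :
    WithLp.toLp 2 (Function.update y i t) =
      WithLp.toLp 2 (Function.update y i 0) + t • EuclideanSpace.single i (1 : ℝ) := by
  ext k
  by_cases hk : k = i
  · subst hk; simp
  · simp [hk]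

variable {ι : Type*} [Fintype ι] {Ω : Set (EuclideanSpace ℝ ι)}
  {f : EuclideanSpace ℝ ι → ℝ}

lemma lintegral_le_of_forall_line_le [DecidableEq ι] {F G : EuclideanSpace ℝ ι → ℝ≥0∞}
    (hF : Measurable F) (hG : Measurable G) (i : ι)
    (h : ∀ x, ∫⁻ t : ℝ, F (x + t • EuclideanSpace.single i 1) ≤
      ∫⁻ t : ℝ, G (x + t • EuclideanSpace.single i 1)) :
    ∫⁻ x, F x ≤ ∫⁻ x, G x := by
  have hpres := PiLp.volume_preserving_toLp ι
  rw [← hpres.lintegral_comp hF, ← hpres.lintegral_comp hG]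
  refine lintegral_le_of_lmarginal_le {i} (hF.comp hpres.measurable) (hG.comp hpres.measurable) ?_
  rw [lmarginal_singleton, lmarginal_singleton]
  intro y
  simpa only [← toLp_update_eq_add_smul_single] using
    h (WithLp.toLp 2 (Function.update y i 0))

lemma lintegral_sq_div_lineEDist_single_le [DecidableEq ι] (hf : ContDiff ℝ 1 f)
    (hfc : HasCompactSupport f) (hΩ : IsOpen Ω) (hconv : Convex ℝ Ω) (hfΩ : tsupport f ⊆ Ω)
    (i : ι) :
    ∫⁻ x, (‖f x‖ₑ / (2 * lineEDist Ω (EuclideanSpace.single i 1) x)) ^ 2 ≤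
      ∫⁻ x, ‖fderiv ℝ f x (EuclideanSpace.single i 1)‖ₑ ^ 2 :=
  lintegral_le_of_forall_line_le (measurable_sq_div_lineEDist hf.continuous hΩ _)
    (measurable_fderiv_apply_sq hf _) i
    (lintegral_line_sq_div_lineEDist_le hf hfc hΩ hconv hfΩ (by simp))

theorem lintegral_sq_div_infEDist_frontier_le (hf : ContDiff ℝ 1 f) (hfc : HasCompactSupport f)
    (hΩ : IsOpen Ω) (hconv : Convex ℝ Ω) (hfΩ : tsupport f ⊆ Ω) :
    ∫⁻ x in Ω, (‖f x‖ₑ / (2 * infEDist x (frontier Ω))) ^ 2 ≤ ∫⁻ x, ‖gradient f x‖ₑ ^ 2 := by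
  classical
  let e := EuclideanSpace.basisFun ι ℝ
  calc ∫⁻ x in Ω, (‖f x‖ₑ / (2 * infEDist x (frontier Ω))) ^ 2
      ≤ ∫⁻ x in Ω, ∑ i, (‖f x‖ₑ / (2 * lineEDist Ω (e i) x)) ^ 2 := by
        refine setLIntegral_mono' hΩ.measurableSet fun x hx ↦ ?_
        simp only [div_two_mul_sq, ← Finset.mul_sum]
        gcongr
        exact inv_infEDist_frontier_sq_le_sum e hΩ hconv hx
    _ ≤ ∫⁻ x, ∑ i, (‖f x‖ₑ / (2 * lineEDist Ω (e i) x)) ^ 2 := setLIntegral_le_lintegral _ _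
    _ = ∑ i, ∫⁻ x, (‖f x‖ₑ / (2 * lineEDist Ω (e i) x)) ^ 2 :=
        lintegral_finsetSum _ fun i _ ↦ measurable_sq_div_lineEDist hf.continuous hΩ _
    _ ≤ ∑ i, ∫⁻ x, ‖fderiv ℝ f x (e i)‖ₑ ^ 2 := by
        simp only [e, EuclideanSpace.basisFun_apply]
        exact Finset.sum_le_sum fun i _ ↦
          lintegral_sq_div_lineEDist_single_le hf hfc hΩ hconv hfΩ i
    _ = ∫⁻ x, ‖gradient f x‖ₑ ^ 2 := by
        rw [← lintegral_finsetSum _ fun i _ ↦ measurable_fderiv_apply_sq hf _]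
        simp only [enorm_gradient_sq e]

lemma setLIntegral_sq_div_infDist_frontier_le (hf : ContDiff ℝ 1 f) (hfc : HasCompactSupport f)
    (hΩ : IsOpen Ω) (hconv : Convex ℝ Ω) (hfΩ : tsupport f ⊆ Ω) :
    ∫⁻ x in Ω, ‖f x / (2 * infDist x (frontier Ω))‖ₑ ^ 2 ≤
      ENNReal.ofReal (∫ x, ‖gradient f x‖ ^ 2) := by
  rw [← lintegral_sq_enorm_eq_ofReal_integral (integrable_norm_gradient_sq hf hfc)]
  simp only [enorm_norm]
  refine le_trans (lintegral_mono fun x ↦ ?_)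
    (lintegral_sq_div_infEDist_frontier_le hf hfc hΩ hconv hfΩ)
  gcongr
  exact enorm_div_infDist_le (f x) x (frontier Ω)

theorem integrableOn_sq_div_infDist_frontier (hf : ContDiff ℝ 1 f) (hfc : HasCompactSupport f)
    (hΩ : IsOpen Ω) (hconv : Convex ℝ Ω) (hfΩ : tsupport f ⊆ Ω) :
    IntegrableOn (fun x ↦ (f x / (2 * infDist x (frontier Ω))) ^ 2) Ω := by
  have hmeas : Measurable fun x ↦ (f x / (2 * infDist x (frontier Ω))) ^ 2 :=
    (hf.continuous.measurable.div
      ((continuous_infDist_pt _).measurable.const_mul 2)).pow_const 2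
  refine ⟨hmeas.aestronglyMeasurable, ?_⟩
  rw [HasFiniteIntegral]
  simp only [enorm_pow]
  exact (setLIntegral_sq_div_infDist_frontier_le hf hfc hΩ hconv hfΩ).trans_lt
    ENNReal.ofReal_lt_top

theorem setIntegral_sq_div_infDist_frontier_le (hf : ContDiff ℝ 1 f) (hfc : HasCompactSupport f)
    (hΩ : IsOpen Ω) (hconv : Convex ℝ Ω) (hfΩ : tsupport f ⊆ Ω) :
    ∫ x in Ω, (f x / (2 * infDist x (frontier Ω))) ^ 2 ≤ ∫ x, ‖gradient f x‖ ^ 2 := by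
  rw [← ENNReal.ofReal_le_ofReal_iff (integral_nonneg fun x ↦ by positivity),
    ← lintegral_sq_enorm_eq_ofReal_integral
      (integrableOn_sq_div_infDist_frontier hf hfc hΩ hconv hfΩ)]
  exact setLIntegral_sq_div_infDist_frontier_le hf hfc hΩ hconv hfΩ

end Euclidean

section Hessian

variable {E : Type*} [NormedAddCommGroup E] [NormedSpace ℝ E] {f g u : E → ℝ}

lemma fderiv_fderiv_apply (hu : ContDiff ℝ 2 u) (x v w : E) :
    fderiv ℝ (fun y ↦ fderiv ℝ u y w) x v = fderiv ℝ (fderiv ℝ u) x v w := by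
  have hd : DifferentiableAt ℝ (fderiv ℝ u) x :=
    (hu.fderiv_right (m := 1) (by norm_num)).differentiable_one x
  rw [fderiv_clm_apply hd (by fun_prop)]
  simp

lemma fderiv_fderiv_apply_comm (hu : ContDiff ℝ 2 u) (x v w : E) :
    fderiv ℝ (fderiv ℝ u) x v w = fderiv ℝ (fderiv ℝ u) x w v :=
  hu.contDiffAt.isSymmSndFDerivAt (by simp) v w

lemma contDiff_fderiv_apply {m n : WithTop ℕ∞} (hu : ContDiff ℝ n u) (hmn : m + 1 ≤ n) (v : E) :
    ContDiff ℝ m fun x ↦ fderiv ℝ u x v :=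
  (hu.fderiv_right hmn).clm_apply contDiff_const

variable [MeasurableSpace E] [BorelSpace E] {μ : Measure E}

lemma integrable_fderiv_fderiv_apply_mul [IsFiniteMeasureOnCompacts μ] (hu : ContDiff ℝ 2 u)
    (huc : HasCompactSupport u) (v w v' w' : E) :
    Integrable (fun x ↦ fderiv ℝ (fderiv ℝ u) x v w * fderiv ℝ (fderiv ℝ u) x v' w') μ := by
  have hcont (a b : E) : Continuous fun x ↦ fderiv ℝ (fderiv ℝ u) x a b :=
    (((hu.fderiv_right (m := 1) (by norm_num)).continuous_fderiv one_ne_zero).clm_apply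
      continuous_const).clm_apply continuous_const
  have hsupp : HasCompactSupport fun x ↦ fderiv ℝ (fderiv ℝ u) x v w :=
    ((huc.fderiv ℝ).fderiv_apply ℝ v).comp_left (g := fun L : E →L[ℝ] ℝ ↦ L w) rfl
  exact ((hcont v w).mul (hcont v' w')).integrable_of_hasCompactSupport hsupp.mul_right

variable [FiniteDimensional ℝ E] [μ.IsAddHaarMeasure]

lemma integral_mul_fderiv_eq_neg (hf : ContDiff ℝ 1 f) (hfc : HasCompactSupport f)
    (hg : ContDiff ℝ 1 g) (v : E) :
    ∫ x, f x * fderiv ℝ g x v ∂μ = -∫ x, fderiv ℝ f x v * g x ∂μ := by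
  have hf' := (contDiff_fderiv_apply (m := 0) hf (by norm_num) v).continuous
  have hg' := (contDiff_fderiv_apply (m := 0) hg (by norm_num) v).continuous
  exact integral_mul_fderiv_eq_neg_fderiv_mul_of_integrable
    ((hf'.mul hg.continuous).integrable_of_hasCompactSupport (hfc.fderiv_apply ℝ v).mul_right)
    ((hf.continuous.mul hg').integrable_of_hasCompactSupport hfc.mul_right)
    ((hf.continuous.mul hg.continuous).integrable_of_hasCompactSupport hfc.mul_right)
    (fun x _ ↦ hf.differentiable_one x) (fun x _ ↦ hg.differentiable_one x)

lemma integral_fderiv_mul_fderiv_comm (hf : ContDiff ℝ 2 f) (hfc : HasCompactSupport f)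
    (hg : ContDiff ℝ 1 g) (v w : E) :
    ∫ x, fderiv ℝ f x v * fderiv ℝ g x w ∂μ = ∫ x, fderiv ℝ f x w * fderiv ℝ g x v ∂μ := by
  have hf' (z : E) : ContDiff ℝ 1 fun x ↦ fderiv ℝ f x z :=
    contDiff_fderiv_apply hf (by norm_num) z
  rw [integral_mul_fderiv_eq_neg (hf' v) (hfc.fderiv_apply ℝ v) hg,
    integral_mul_fderiv_eq_neg (hf' w) (hfc.fderiv_apply ℝ w) hg]
  simp only [fderiv_fderiv_apply hf, fderiv_fderiv_apply_comm hf _ w v]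

lemma integral_fderiv_fderiv_mul_eq_integral_sq (hu : ContDiff ℝ 3 u) (huc : HasCompactSupport u)
    (v w : E) :
    ∫ x, fderiv ℝ (fderiv ℝ u) x v v * fderiv ℝ (fderiv ℝ u) x w w ∂μ =
      ∫ x, fderiv ℝ (fderiv ℝ u) x v w ^ 2 ∂μ := by
  have hu2 : ContDiff ℝ 2 u := hu.of_le (by norm_num)
  have hcomm := integral_fderiv_mul_fderiv_comm (μ := μ)
    (contDiff_fderiv_apply (m := 2) hu (by norm_num) v) (huc.fderiv_apply ℝ v)
    (contDiff_fderiv_apply (m := 1) hu2 (by norm_num) w) v w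
  simpa only [fderiv_fderiv_apply hu2, fderiv_fderiv_apply_comm hu2 _ w v, ← sq] using hcomm

end Hessian

section Laplacian

lemma norm_gradient_fderiv_apply_sq {ι E : Type*} [Fintype ι] [NormedAddCommGroup E]
    [InnerProductSpace ℝ E] [CompleteSpace E] {u : E → ℝ} (hu : ContDiff ℝ 2 u)
    (b : OrthonormalBasis ι ℝ E) (v x : E) :
    ‖gradient (fun y ↦ fderiv ℝ u y v) x‖ ^ 2 =
      ∑ i, fderiv ℝ (fderiv ℝ u) x v (b i) ^ 2 := by
  simp only [norm_gradient_sq b, fderiv_fderiv_apply hu, fderiv_fderiv_apply_comm hu x v]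

variable {N : ℕ} {u : EuclideanSpace ℝ (Fin N) → ℝ}

lemma lap_eq_sum_fderiv_fderiv (u : EuclideanSpace ℝ (Fin N) → ℝ) (x : EuclideanSpace ℝ (Fin N)) :
    lap u x = ∑ i, fderiv ℝ (fderiv ℝ u) x (EuclideanSpace.single i 1)
      (EuclideanSpace.single i 1) :=
  Finset.sum_congr rfl fun _ _ ↦ iteratedFDeriv_two_apply u x _

lemma lap_eq_zero_of_notMem_tsupport {x : EuclideanSpace ℝ (Fin N)} (hx : x ∉ tsupport u) :
    lap u x = 0 := by
  have hzero : fderiv ℝ (fderiv ℝ u) x = 0 := image_eq_zero_of_notMem_tsupport fun h ↦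
    hx (tsupport_fderiv_subset ℝ (tsupport_fderiv_subset ℝ h))
  simp [lap_eq_sum_fderiv_fderiv, hzero]

lemma setIntegral_lap_sq_eq_integral {Ω : Set (EuclideanSpace ℝ (Fin N))} (huΩ : tsupport u ⊆ Ω) :
    ∫ x in Ω, lap u x ^ 2 = ∫ x, lap u x ^ 2 :=
  setIntegral_eq_integral_of_forall_compl_eq_zero fun x hx ↦ by
    rw [lap_eq_zero_of_notMem_tsupport fun h ↦ hx (huΩ h), zero_pow two_ne_zero]

theorem integral_lap_sq_eq_sum (hu : ContDiff ℝ 3 u) (huc : HasCompactSupport u) :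
    ∫ x, lap u x ^ 2 =
      ∑ i, ∫ x, ‖gradient (fun y ↦ fderiv ℝ u y (EuclideanSpace.single i 1)) x‖ ^ 2 := by
  let e := EuclideanSpace.basisFun (Fin N) ℝ
  have hu2 : ContDiff ℝ 2 u := hu.of_le (by norm_num)
  have hint (v w v' w' : EuclideanSpace ℝ (Fin N)) :
      Integrable fun x ↦ fderiv ℝ (fderiv ℝ u) x v w * fderiv ℝ (fderiv ℝ u) x v' w' :=
    integrable_fderiv_fderiv_apply_mul hu2 huc v w v' w'
  calc ∫ x, lap u x ^ 2
      = ∫ x, ∑ i, ∑ j, fderiv ℝ (fderiv ℝ u) x (e i) (e i) *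
          fderiv ℝ (fderiv ℝ u) x (e j) (e j) := by
        simp only [lap_eq_sum_fderiv_fderiv, sq, Finset.sum_mul_sum, e,
          EuclideanSpace.basisFun_apply]
    _ = ∑ i, ∑ j, ∫ x, fderiv ℝ (fderiv ℝ u) x (e i) (e i) *
          fderiv ℝ (fderiv ℝ u) x (e j) (e j) := by
        rw [integral_finsetSum _ fun i _ ↦ integrable_finsetSum _ fun j _ ↦ hint _ _ _ _]
        exact Finset.sum_congr rfl fun i _ ↦ integral_finsetSum _ fun j _ ↦ hint _ _ _ _
    _ = ∑ i, ∑ j, ∫ x, fderiv ℝ (fderiv ℝ u) x (e i) (e j) ^ 2 := by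
        simp only [integral_fderiv_fderiv_mul_eq_integral_sq hu huc]
    _ = ∑ i, ∫ x, ‖gradient (fun y ↦ fderiv ℝ u y (EuclideanSpace.single i 1)) x‖ ^ 2 := by
        refine Finset.sum_congr rfl fun i _ ↦ ?_
        simp only [← EuclideanSpace.basisFun_apply, norm_gradient_fderiv_apply_sq hu2 e]
        exact (integral_finsetSum _ fun j _ ↦ by simpa only [sq] using hint _ _ _ _).symm

end Laplacian

theorem gradient_rellich_convex_general (N : ℕ) (Ω : Set (EuclideanSpace ℝ (Fin N)))
    (hΩ : IsOpen Ω) (hconv : Convex ℝ Ω)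
    (u : EuclideanSpace ℝ (Fin N) → ℝ) (hu : ContDiff ℝ 3 u)
    (husupp : HasCompactSupport u) (husupp' : tsupport u ⊆ Ω) :
    ∫ x in Ω, (lap u x) ^ 2 ≥
      1 / 4 * ∫ x in Ω, ‖gradient u x‖ ^ 2 / Metric.infDist x (frontier Ω) ^ 2 := by
  let e := EuclideanSpace.basisFun (Fin N) ℝ
  have hdu (i : Fin N) : ContDiff ℝ 1 fun x ↦ fderiv ℝ u x (e i) :=
    contDiff_fderiv_apply hu (by norm_num) _
  have hduΩ (i : Fin N) : tsupport (fun x ↦ fderiv ℝ u x (e i)) ⊆ Ω :=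
    (tsupport_fderiv_apply_subset ℝ (e i)).trans husupp'
  calc 1 / 4 * ∫ x in Ω, ‖gradient u x‖ ^ 2 / infDist x (frontier Ω) ^ 2
      = ∫ x in Ω, ∑ i, (fderiv ℝ u x (e i) / (2 * infDist x (frontier Ω))) ^ 2 := by
        rw [← integral_const_mul]
        congr with x
        rw [norm_gradient_sq e, Finset.sum_div, Finset.mul_sum]
        exact Finset.sum_congr rfl fun i _ ↦ by ring
    _ = ∑ i, ∫ x in Ω, (fderiv ℝ u x (e i) / (2 * infDist x (frontier Ω))) ^ 2 :=
        integral_finsetSum _ fun i _ ↦ integrableOn_sq_div_infDist_frontier (hdu i)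
          (husupp.fderiv_apply ℝ _) hΩ hconv (hduΩ i)
    _ ≤ ∑ i, ∫ x, ‖gradient (fun y ↦ fderiv ℝ u y (e i)) x‖ ^ 2 :=
        Finset.sum_le_sum fun i _ ↦ setIntegral_sq_div_infDist_frontier_le (hdu i)
          (husupp.fderiv_apply ℝ _) hΩ hconv (hduΩ i)
    _ = ∫ x in Ω, lap u x ^ 2 := by
        simp only [e, EuclideanSpace.basisFun_apply, setIntegral_lap_sq_eq_integral husupp',
          integral_lap_sq_eq_sum hu husupp]

theorem gradient_rellich_convex (N : ℕ) (Ω : Set (EuclideanSpace ℝ (Fin N)))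
    (hΩ : IsOpen Ω) (hconv : Convex ℝ Ω)
    (hbdd : BddAbove ((fun x => Metric.infDist x (frontier Ω)) '' Ω))
    (u : EuclideanSpace ℝ (Fin N) → ℝ) (hu : ContDiff ℝ (⊤ : ℕ∞) u)
    (husupp : HasCompactSupport u) (husupp' : tsupport u ⊆ Ω) :
    ∫ x in Ω, (lap u x) ^ 2 ≥
      1 / 4 * ∫ x in Ω, ‖gradient u x‖ ^ 2 / Metric.infDist x (frontier Ω) ^ 2 :=
  gradient_rellich_convex_general N Ω hΩ hconv u
    (hu.of_le (WithTop.coe_le_coe.2 (le_top : (3 : ℕ∞) ≤ ⊤))) husupp husupp'
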